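/- arXiv:1702.05142 — 4 statements merged into one kernel-verified Lean document; each statement's English description precedes it below -/
import Mathlib

section
/- In the stated network setup with cost assumptions and with q_k = β μ_k p_k for positive step-sizes μ_k and a positive constant β: there exists a unique pair (W⋆, Y⋆_o) ∈ (ℝ^M)^N × (ℝ^M)^N such that Y⋆_o lies in the range of V ⊗ I_M and, for every k, ∑_l Ā_{l,k} μ_l ∇J_l(w⋆_l) + p_k⁻¹ ∑_l V_{k,l} (Y⋆_o)_l = 0 and ∑_l V_{k,l} w⋆_l = 0. Moreover W⋆ = (w⋆,…,w⋆), where w⋆ is the unique minimizer of 𝒥⋆(w) = ∑_k q_k J_k(w). -/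
open Matrix

/-!
Primitivity of `A` and `A p = p` force the kernel of `V` to be the line spanned by the
all-ones vector (`mulVec_ker_const`), and since `V` is symmetric its range is the space of vectors
with zero sum (`exists_block_preimage`); both facts pass to block vectors coordinatewise.

The condition `V W = 0` therefore means that `W = (w, …, w)`. Multiplying the first optimality
condition by `p k` and summing over `k` removes the `Y` term, because the columns of `V` sum to
zero, and leaves `∑ l, p l μ l ∇J l (w) = 0`, because `A p = p`. This is the stationarity condition
of the aggregate cost, whose only solution is the minimizer (`critical_eq_minimizer`). Conversely,
at the minimizer the right-hand side for `V Y` has zero sum, so it is in the range of `V`, and `Y`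
is made unique by requiring it to lie in the range of `V`, which meets the kernel of `V` only in
zero.
-/

/-! ### Kernel and range of `V` -/

/-- The fixed-point equation of a strictly positive matrix `B` with positive fixed vector `p` only
has the multiples of `p` as solutions: at an index where `x` is maximal, `x i` is a weighted
average of all the `x j` with positive weights. -/
lemma const_of_pos_fixed {N : ℕ} (B : Matrix (Fin N) (Fin N) ℝ) (hB : ∀ i j, 0 < B i j)
    (p : Fin N → ℝ) (hp : ∀ k, 0 < p k) (hBp : B.mulVec p = p) (x : Fin N → ℝ)
    (hx : B.mulVec (fun k => p k * x k) = fun k => p k * x k) (i j : Fin N) : x i = x j := by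
  have : Nonempty (Fin N) := ⟨i⟩
  obtain ⟨m, hm⟩ := Finite.exists_max x
  have h1 : ∑ k, B m k * p k = p m := congrFun hBp m
  have h2 : ∑ k, B m k * (p k * x k) = p m * x m := congrFun hx m
  have h3 : ∑ k, B m k * p k * (x m - x k) = 0 := by
    calc ∑ k, B m k * p k * (x m - x k)
        = (∑ k, B m k * p k) * x m - ∑ k, B m k * (p k * x k) := by
          rw [Finset.sum_mul, ← Finset.sum_sub_distrib]
          exact Finset.sum_congr rfl fun k _ => by ring
      _ = 0 := by rw [h1, h2, sub_self]
  rw [Finset.sum_eq_zero_iff_of_nonneg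
    (fun k _ => mul_nonneg (mul_pos (hB m k) (hp k)).le (sub_nonneg.2 (hm k)))] at h3
  have h4 : ∀ k, x m = x k := fun k => by
    have h5 := h3 k (Finset.mem_univ k)
    rcases mul_eq_zero.1 h5 with h | h
    · exact absurd h (mul_pos (hB m k) (hp k)).ne'
    · linarith
  rw [← h4 i, ← h4 j]

lemma mulVec_ker_const {N : ℕ} (A : Matrix (Fin N) (Fin N) ℝ)
    (hAprim : ∃ m : ℕ, 0 < m ∧ ∀ i j, 0 < (A ^ m) i j)
    (p : Fin N → ℝ) (hp : ∀ k, 0 < p k) (hAp : A.mulVec p = p)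
    (V : Matrix (Fin N) (Fin N) ℝ)
    (hVsq : V * V = (2⁻¹ : ℝ) • (Matrix.diagonal p - A * Matrix.diagonal p))
    (x : Fin N → ℝ) (hx : V.mulVec x = 0) (i j : Fin N) : x i = x j := by
  obtain ⟨m, -, hm⟩ := hAprim
  have hd : Matrix.diagonal p *ᵥ x = fun k => p k * x k := by
    ext k; simp [Matrix.mulVec_diagonal]
  have h1 : (V * V) *ᵥ x = 0 := by rw [← Matrix.mulVec_mulVec, hx, Matrix.mulVec_zero]
  rw [hVsq, Matrix.smul_mulVec, smul_eq_zero_iff_right (by norm_num), Matrix.sub_mulVec,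
    ← Matrix.mulVec_mulVec, hd, sub_eq_zero] at h1
  have hpow : ∀ (y : Fin N → ℝ), A *ᵥ y = y → ∀ n : ℕ, (A ^ n) *ᵥ y = y := by
    intro y hy n
    induction n with
    | zero => simp
    | succ n ih => rw [pow_succ, ← Matrix.mulVec_mulVec, hy, ih]
  exact const_of_pos_fixed (A ^ m) hm p hp (hpow p hAp m) x (hpow _ h1.symm m) i j

lemma col_sum_zero {N : ℕ} (A : Matrix (Fin N) (Fin N) ℝ)
    (p : Fin N → ℝ) (hAp : A.mulVec p = p)
    (V : Matrix (Fin N) (Fin N) ℝ) (hV : V.PosSemidef)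
    (hVsq : V * V = (2⁻¹ : ℝ) • (Matrix.diagonal p - A * Matrix.diagonal p)) :
    (∀ k, ∑ l, V k l = 0) ∧ (∀ l, ∑ k, V k l = 0) := by
  have hsymm : ∀ k l, V k l = V l k := fun k l => by
    have := hV.1.apply l k
    simpa using this
  have hd : Matrix.diagonal p *ᵥ (fun _ => (1 : ℝ)) = p := by
    ext k; simp [Matrix.mulVec_diagonal]
  have h1 : (V * V) *ᵥ (fun _ => (1 : ℝ)) = 0 := by
    rw [hVsq, Matrix.smul_mulVec, Matrix.sub_mulVec, ← Matrix.mulVec_mulVec, hd, hAp, sub_self,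
      smul_zero]
  have hVt : Vᵀ = V := by ext k l; exact hsymm l k
  -- `V` is symmetric, so `V * V` and `V` have the same kernel.
  have h2 : V *ᵥ (fun _ => (1 : ℝ)) = 0 := by
    have h3 : (V *ᵥ (fun _ => (1 : ℝ))) ⬝ᵥ (V *ᵥ (fun _ => (1 : ℝ))) = 0 := by
      rw [Matrix.dotProduct_mulVec, ← Matrix.mulVec_transpose, hVt, Matrix.mulVec_mulVec, h1,
        zero_dotProduct]
    exact dotProduct_self_eq_zero.1 h3
  have h4 : ∀ k, ∑ l, V k l = 0 := fun k => by
    have := congrFun h2 k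
    simpa [Matrix.mulVec, dotProduct] using this
  exact ⟨h4, fun l => by rw [← h4 l]; exact Finset.sum_congr rfl fun k _ => hsymm k l⟩

lemma block_ker_const {N M : ℕ} (V : Matrix (Fin N) (Fin N) ℝ)
    (hker : ∀ x : Fin N → ℝ, V.mulVec x = 0 → ∀ i j, x i = x j)
    (X : Fin N → EuclideanSpace ℝ (Fin M)) (hX : ∀ k, ∑ l, V k l • X l = 0) (i j : Fin N) :
    X i = X j := by
  ext c
  refine hker (fun l => X l c) ?_ i j
  ext k
  have := congrArg (fun v : EuclideanSpace ℝ (Fin M) => v c) (hX k)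
  simpa [Matrix.mulVec, dotProduct] using this

lemma block_sum_zero {N M : ℕ} (V : Matrix (Fin N) (Fin N) ℝ) (hcol : ∀ l, ∑ k, V k l = 0)
    (X : Fin N → EuclideanSpace ℝ (Fin M)) : ∑ k, ∑ l, V k l • X l = 0 := by
  rw [Finset.sum_comm]
  simp [← Finset.sum_smul, hcol]

/-- A block vector in the kernel of `V` with zero sum vanishes. -/
lemma block_eq_zero {N M : ℕ} (V : Matrix (Fin N) (Fin N) ℝ)
    (hker : ∀ x : Fin N → ℝ, V.mulVec x = 0 → ∀ i j, x i = x j)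
    (X : Fin N → EuclideanSpace ℝ (Fin M)) (hX : ∀ k, ∑ l, V k l • X l = 0)
    (hs : ∑ k, X k = 0) : X = 0 := by
  ext1 i
  have h : ∀ k, X k = X i := fun k => block_ker_const V hker X hX k i
  have hN : (N : ℝ) ≠ 0 := by
    have := i.pos
    positivity
  rw [Finset.sum_congr rfl (fun k _ => h k), Finset.sum_const, Finset.card_univ, Fintype.card_fin,
    ← Nat.cast_smul_eq_nsmul ℝ, smul_eq_zero] at hs
  exact hs.resolve_left hN

/-- Every block vector with zero sum is in the range of `V`: adding the matrix of all ones to `V`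
makes it injective, hence surjective, and a preimage of a zero-sum vector has zero sum. -/
lemma exists_block_preimage {N M : ℕ} (V : Matrix (Fin N) (Fin N) ℝ)
    (hker : ∀ x : Fin N → ℝ, V.mulVec x = 0 → ∀ i j, x i = x j)
    (hcol : ∀ l, ∑ k, V k l = 0)
    (b : Fin N → EuclideanSpace ℝ (Fin M)) (hb : ∑ k, b k = 0) :
    ∃ X : Fin N → EuclideanSpace ℝ (Fin M), ∀ k, ∑ l, V k l • X l = b k := by
  let T : (Fin N → EuclideanSpace ℝ (Fin M)) →ₗ[ℝ] (Fin N → EuclideanSpace ℝ (Fin M)) :=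
    { toFun := fun X k => ∑ l, V k l • X l + ∑ l, X l
      map_add' := fun X Y => by
        ext1 k
        simp only [Pi.add_apply, smul_add, Finset.sum_add_distrib]
        abel
      map_smul' := fun c X => by
        ext1 k
        simp only [Pi.smul_apply, smul_add, Finset.smul_sum, RingHom.id_apply, smul_comm c] }
  have hT : ∀ X, ∑ k, T X k = 0 → ∑ l, X l = 0 := by
    intro X h
    change ∑ k, (∑ l, V k l • X l + ∑ l, X l) = 0 at h
    rw [Finset.sum_add_distrib, block_sum_zero V hcol, zero_add, Finset.sum_const,
      Finset.card_univ, Fintype.card_fin, ← Nat.cast_smul_eq_nsmul ℝ, smul_eq_zero] at h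
    rcases h with h | h
    · have : N = 0 := by exact_mod_cast h
      subst this
      simp
    · exact h
  have hinj : Function.Injective T := by
    rw [injective_iff_map_eq_zero]
    intro X hX
    have hs := hT X (by simp [hX])
    refine block_eq_zero V hker X (fun k => ?_) hs
    have : ∑ l, V k l • X l + ∑ l, X l = 0 := congrFun hX k
    rwa [hs, add_zero] at this
  obtain ⟨X, hX⟩ := LinearMap.injective_iff_surjective.1 hinj b
  have hs := hT X (by rw [hX, hb])
  refine ⟨X, fun k => ?_⟩
  have : ∑ l, V k l • X l + ∑ l, X l = b k := congrFun hX k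
  rwa [hs, add_zero] at this

/-! ### First-order conditions for convex functions -/

lemma convex_first_order {E : Type*} [NormedAddCommGroup E] [InnerProductSpace ℝ E]
    [CompleteSpace E] {f : E → ℝ} (hf : ConvexOn ℝ Set.univ f) {g x : E}
    (hg : HasGradientAt f g x) (y : E) : f x + inner ℝ g (y - x) ≤ f y := by
  have h1 : ConvexOn ℝ Set.univ (f ∘ (AffineMap.lineMap x y : ℝ →ᵃ[ℝ] E)) :=
    hf.comp_affineMap _
  have h2 : HasDerivAt (f ∘ (AffineMap.lineMap x y : ℝ →ᵃ[ℝ] E)) (inner ℝ g (y - x)) 0 := by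
    have h3 : HasFDerivAt f (InnerProductSpace.toDual ℝ E g)
        ((AffineMap.lineMap x y : ℝ →ᵃ[ℝ] E) 0) := by
      rw [AffineMap.lineMap_apply_zero]; exact hg.hasFDerivAt
    exact h3.comp_hasDerivAt (0 : ℝ) AffineMap.hasDerivAt_lineMap
  have h4 := h1.le_slope_of_hasDerivAt (Set.mem_univ 0) (Set.mem_univ 1) one_pos h2
  simp [slope] at h4
  linarith

lemma strictConvex_first_order {E : Type*} [NormedAddCommGroup E] [InnerProductSpace ℝ E]
    [CompleteSpace E] {f : E → ℝ} (hf : StrictConvexOn ℝ Set.univ f) {g x : E}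
    (hg : HasGradientAt f g x) {y : E} (hxy : x ≠ y) : f x + inner ℝ g (y - x) < f y := by
  -- Strictness comes from comparing the values at the two points and at their midpoint.
  have h1 := hf.2 (Set.mem_univ x) (Set.mem_univ y) hxy
    (show (0 : ℝ) < 2⁻¹ by norm_num) (show (0 : ℝ) < 2⁻¹ by norm_num) (by norm_num)
  have h2 := convex_first_order hf.convexOn hg ((2⁻¹ : ℝ) • x + (2⁻¹ : ℝ) • y)
  have h3 : (2⁻¹ : ℝ) • x + (2⁻¹ : ℝ) • y - x = (2⁻¹ : ℝ) • (y - x) := by module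
  rw [h3, inner_smul_right] at h2
  simp only [smul_eq_mul] at h1
  linarith

/-- A stationary point of the aggregate cost is its minimizer; one strictly convex summand is
enough for uniqueness. -/
lemma critical_eq_minimizer {N : ℕ} {E : Type*} [NormedAddCommGroup E] [InnerProductSpace ℝ E]
    [CompleteSpace E] (J : Fin N → E → ℝ) (gJ : Fin N → E → E)
    (hgJ : ∀ k x, HasGradientAt (J k) (gJ k x) x)
    (hconv : ∀ k, ConvexOn ℝ Set.univ (J k)) (k₀ : Fin N)
    (hsc : StrictConvexOn ℝ Set.univ (J k₀))
    (q : Fin N → ℝ) (hq : ∀ k, 0 < q k) (wstar : E)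
    (hwstar : ∀ w, ∑ k, q k * J k wstar ≤ ∑ k, q k * J k w)
    (w : E) (hw : ∑ k, q k • gJ k w = 0) : w = wstar := by
  by_contra hne
  have h1 : ∑ k, q k * (J k w + inner ℝ (gJ k w) (wstar - w)) < ∑ k, q k * J k wstar := by
    refine Finset.sum_lt_sum (fun k _ => ?_) ⟨k₀, Finset.mem_univ _, ?_⟩
    · exact mul_le_mul_of_nonneg_left (convex_first_order (hconv k) (hgJ k w) wstar) (hq k).le
    · exact mul_lt_mul_of_pos_left (strictConvex_first_order hsc (hgJ k₀ w) hne) (hq k₀)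
  have h2 : ∑ k, q k * inner ℝ (gJ k w) (wstar - w) = 0 := by
    have := congrArg (fun v => inner ℝ v (wstar - w)) hw
    simpa [sum_inner, real_inner_smul_left] using this
  simp only [mul_add, Finset.sum_add_distrib, h2, add_zero] at h1
  exact absurd (hwstar w) (not_le.2 h1)

lemma minimizer_critical {N : ℕ} {E : Type*} [NormedAddCommGroup E] [InnerProductSpace ℝ E]
    [CompleteSpace E] (J : Fin N → E → ℝ) (gJ : Fin N → E → E)
    (hgJ : ∀ k x, HasGradientAt (J k) (gJ k x) x)
    (q : Fin N → ℝ) (wstar : E)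
    (hwstar : ∀ w, ∑ k, q k * J k wstar ≤ ∑ k, q k * J k w) :
    ∑ k, q k • gJ k wstar = 0 := by
  have h1 : HasFDerivAt (fun w => ∑ k, q k * J k w)
      (∑ k, q k • InnerProductSpace.toDual ℝ E (gJ k wstar)) wstar :=
    HasFDerivAt.fun_sum fun k _ => (hgJ k wstar).hasFDerivAt.const_mul (q k)
  have h2 : IsLocalMin (fun w => ∑ k, q k * J k w) wstar := Filter.Eventually.of_forall hwstar
  have h3 := h2.hasFDerivAt_eq_zero h1
  apply (InnerProductSpace.toDual ℝ E).injective
  simpa [map_sum] using h3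

/-! ### The optimality conditions -/

/-- The `p`-weighted sum of the gradient terms of the first optimality condition, at a consensus
vector `(w, …, w)` with gradients `g l`, is up to the factor `β` the gradient of the aggregate
cost. -/
lemma weighted_gradient_sum {N M : ℕ} (A : Matrix (Fin N) (Fin N) ℝ) (p : Fin N → ℝ)
    (hAp : A.mulVec p = p) (q μ : Fin N → ℝ) (β : ℝ) (hqrel : ∀ k, q k = β * μ k * p k)
    (g : Fin N → EuclideanSpace ℝ (Fin M)) :
    β • ∑ k, p k • ∑ l, (((2⁻¹ : ℝ) • ((1 : Matrix (Fin N) (Fin N) ℝ) + A)) l k * μ l) • g l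
      = ∑ l, q l • g l := by
  have hrow : ∀ l, ∑ k, ((2⁻¹ : ℝ) • ((1 : Matrix (Fin N) (Fin N) ℝ) + A)) l k * p k = p l := by
    intro l
    have h1 : ((2⁻¹ : ℝ) • ((1 : Matrix (Fin N) (Fin N) ℝ) + A)) *ᵥ p = p := by
      rw [Matrix.smul_mulVec, Matrix.add_mulVec, Matrix.one_mulVec, hAp]
      module
    exact congrFun h1 l
  simp only [Finset.smul_sum]
  rw [Finset.sum_comm]
  refine Finset.sum_congr rfl fun l _ => ?_
  simp only [smul_smul, ← Finset.sum_smul]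
  congr 1
  rw [hqrel l]
  conv_rhs => rw [← hrow l, Finset.mul_sum]
  exact Finset.sum_congr rfl fun k _ => by ring

/-- Particular solution pair: in the network setup with cost assumptions and
`q_k = β μ_k p_k` (μ_k > 0, β > 0), there exists a unique pair `(W⋆, Y⋆_o)` with `Y⋆_o` in
the range of `V ⊗ I_M` satisfying the optimality conditions
`∑_l Ā_{l,k} μ_l ∇J_l(w⋆_l) + p_k⁻¹ ∑_l V_{k,l}(Y⋆_o)_l = 0` and `∑_l V_{k,l} w⋆_l = 0`
for all `k`; moreover `W⋆ = (w⋆,…,w⋆)` with `w⋆` the unique minimizer of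
`𝒥⋆(w) = ∑_k q_k J_k(w)`. -/
theorem stmt_9 (N M : ℕ) (hN : 0 < N) (A : Matrix (Fin N) (Fin N) ℝ)
    (hApos : ∀ i j, 0 ≤ A i j)
    (hAleft : ∀ j, ∑ i, A i j = 1)
    (hAprim : ∃ m : ℕ, 0 < m ∧ ∀ i j, 0 < (A ^ m) i j)
    (p : Fin N → ℝ) (hp : ∀ k, 0 < p k) (hpsum : ∑ k, p k = 1)
    (hAp : A.mulVec p = p)
    (hbal : Matrix.diagonal p * Aᵀ = A * Matrix.diagonal p)
    (V : Matrix (Fin N) (Fin N) ℝ) (hV : V.PosSemidef)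
    (hVsq : V * V = (2⁻¹ : ℝ) • (Matrix.diagonal p - A * Matrix.diagonal p))
    (J : Fin N → EuclideanSpace ℝ (Fin M) → ℝ)
    (gJ : Fin N → EuclideanSpace ℝ (Fin M) → EuclideanSpace ℝ (Fin M))
    (hgJ : ∀ k x, HasGradientAt (J k) (gJ k x) x)
    (hconv : ∀ k, ConvexOn ℝ Set.univ (J k))
    (δ : ℝ) (hδ : 0 < δ)
    (hLip : ∀ k x y, ‖gJ k x - gJ k y‖ ≤ δ * ‖x - y‖)
    (ν : ℝ) (hν : 0 < ν) (k₀ : Fin N)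
    (hsc : StrongConvexOn Set.univ ν (J k₀))
    (q : Fin N → ℝ) (hq : ∀ k, 0 < q k)
    (μ : Fin N → ℝ) (hμ : ∀ k, 0 < μ k)
    (β : ℝ) (hβ : 0 < β)
    (hqrel : ∀ k, q k = β * μ k * p k)
    (wstar : EuclideanSpace ℝ (Fin M))
    (hwstar : ∀ w, ∑ k, q k * J k wstar ≤ ∑ k, q k * J k w) :
    (∃! z : (Fin N → EuclideanSpace ℝ (Fin M)) × (Fin N → EuclideanSpace ℝ (Fin M)),
      (∃ Xv : Fin N → EuclideanSpace ℝ (Fin M), z.2 = fun k => ∑ l, V k l • Xv l) ∧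
      (∀ k, (∑ l, (((2⁻¹ : ℝ) • ((1 : Matrix (Fin N) (Fin N) ℝ) + A)) l k * μ l)
          • gJ l (z.1 l)) + (p k)⁻¹ • (∑ l, V k l • z.2 l) = 0) ∧
      (∀ k, ∑ l, V k l • z.1 l = 0)) ∧
    ∀ z : (Fin N → EuclideanSpace ℝ (Fin M)) × (Fin N → EuclideanSpace ℝ (Fin M)),
      ((∃ Xv : Fin N → EuclideanSpace ℝ (Fin M), z.2 = fun k => ∑ l, V k l • Xv l) ∧
       (∀ k, (∑ l, (((2⁻¹ : ℝ) • ((1 : Matrix (Fin N) (Fin N) ℝ) + A)) l k * μ l)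
           • gJ l (z.1 l)) + (p k)⁻¹ • (∑ l, V k l • z.2 l) = 0) ∧
       (∀ k, ∑ l, V k l • z.1 l = 0)) →
      z.1 = fun _ => wstar := by
  have hker := mulVec_ker_const A hAprim p hp hAp V hVsq
  obtain ⟨hrow, hcol⟩ := col_sum_zero A p hAp V hV hVsq
  have hscale : ∀ k (v : EuclideanSpace ℝ (Fin M)), p k • (p k)⁻¹ • v = v := fun k v => by
    rw [smul_smul, mul_inv_cancel₀ (hp k).ne', one_smul]
  have hcons : ∀ z : (Fin N → EuclideanSpace ℝ (Fin M)) × (Fin N → EuclideanSpace ℝ (Fin M)),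
      ((∃ Xv : Fin N → EuclideanSpace ℝ (Fin M), z.2 = fun k => ∑ l, V k l • Xv l) ∧
       (∀ k, (∑ l, (((2⁻¹ : ℝ) • ((1 : Matrix (Fin N) (Fin N) ℝ) + A)) l k * μ l)
           • gJ l (z.1 l)) + (p k)⁻¹ • (∑ l, V k l • z.2 l) = 0) ∧
       (∀ k, ∑ l, V k l • z.1 l = 0)) →
      z.1 = fun _ => wstar := by
    rintro ⟨W, Y⟩ ⟨-, hopt, hVW⟩
    dsimp only at hopt hVW ⊢
    have hW : ∀ l, W l = W k₀ := fun l => block_ker_const V hker W hVW l k₀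
    have hcrit : ∑ k, q k • gJ k (W k₀) = 0 := by
      rw [← weighted_gradient_sum A p hAp q μ β hqrel]
      have h1 : ∑ k, p k • ((∑ l, (((2⁻¹ : ℝ) • ((1 : Matrix (Fin N) (Fin N) ℝ) + A)) l k * μ l)
          • gJ l (W l)) + (p k)⁻¹ • (∑ l, V k l • Y l)) = 0 :=
        Finset.sum_eq_zero fun k _ => by rw [hopt k, smul_zero]
      simp only [smul_add, hscale, Finset.sum_add_distrib, block_sum_zero V hcol, add_zero] at h1
      simp only [hW] at h1
      simp only [smul_add]
      rw [h1, smul_zero]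
    have hw := critical_eq_minimizer J gJ hgJ hconv k₀ (hsc.strictConvexOn hν) q hq wstar hwstar
      (W k₀) hcrit
    ext1 l
    rw [hW l, hw]
  refine ⟨?_, hcons⟩
  have hcrit := minimizer_critical J gJ hgJ q wstar hwstar
  rw [← weighted_gradient_sum A p hAp q μ β hqrel, smul_eq_zero_iff_right hβ.ne'] at hcrit
  -- `X` solves `V X = b` for the required value `b` of `V Y`; `Y` is `X` minus its average, which
  -- has zero sum and so lies in the range of `V`.
  obtain ⟨X, hX⟩ := exists_block_preimage V hker hcol
    (fun k => -(p k • ∑ l, (((2⁻¹ : ℝ) • ((1 : Matrix (Fin N) (Fin N) ℝ) + A)) l k * μ l)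
      • gJ l wstar)) (by rw [Finset.sum_neg_distrib, hcrit, neg_zero])
  have hN' : (N : ℝ) ≠ 0 := by positivity
  obtain ⟨Z, hZ⟩ := exists_block_preimage V hker hcol
    (fun k => X k - (N : ℝ)⁻¹ • ∑ l, X l) (by
      rw [Finset.sum_sub_distrib, Finset.sum_const, Finset.card_univ, Fintype.card_fin,
        ← Nat.cast_smul_eq_nsmul ℝ, smul_smul, mul_inv_cancel₀ hN', one_smul, sub_self])
  refine ⟨(fun _ => wstar, fun k => X k - (N : ℝ)⁻¹ • ∑ l, X l), ⟨⟨Z, ?_⟩, fun k => ?_, fun k => ?_⟩,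
    ?_⟩
  · ext1 k
    exact (hZ k).symm
  · have h1 : ∑ l, V k l • (X l - (N : ℝ)⁻¹ • ∑ l, X l) = ∑ l, V k l • X l := by
      simp only [smul_sub, Finset.sum_sub_distrib]
      rw [← Finset.sum_smul, hrow, zero_smul, sub_zero]
    dsimp only
    rw [h1, hX k, smul_neg, smul_smul, inv_mul_cancel₀ (hp k).ne', one_smul, add_neg_cancel]
  · dsimp only
    rw [← Finset.sum_smul, hrow, zero_smul]
  · rintro ⟨W, Y⟩ hz
    have hW := hcons _ hz
    obtain ⟨⟨Xv, hY⟩, hopt, -⟩ := hz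
    dsimp only at hW hY hopt
    subst hW
    have h0 : (fun k => Y k - X k + (N : ℝ)⁻¹ • ∑ l, X l) = 0 := by
      refine block_eq_zero V hker _ (fun k => ?_) ?_
      · have h2 : ∑ l, V k l • Y l = ∑ l, V k l • X l := by
          have h3 := congrArg (fun v => p k • v) (hopt k)
          simp only [smul_add (p k), hscale, smul_zero] at h3
          rw [hX k]
          exact eq_neg_of_add_eq_zero_right h3
        simp only [smul_add, smul_sub, Finset.sum_add_distrib, Finset.sum_sub_distrib]
        rw [h2, ← Finset.sum_smul, hrow, zero_smul, sub_self, add_zero]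
      · have h4 : ∑ k, Y k = 0 := by rw [hY]; exact block_sum_zero V hcol Xv
        rw [Finset.sum_add_distrib, Finset.sum_sub_distrib, h4, Finset.sum_const,
          Finset.card_univ, Fintype.card_fin, ← Nat.cast_smul_eq_nsmul ℝ, smul_smul,
          mul_inv_cancel₀ hN', one_smul]
        abel
    refine Prod.ext rfl ?_
    ext1 k
    have h5 : Y k - X k + (N : ℝ)⁻¹ • ∑ l, X l = 0 := congrFun h0 k
    rw [sub_add] at h5
    exact sub_eq_zero.1 h5
end

section
/- In the stated network setup, let B = [[Āᵀ, −P⁻¹V],[VĀᵀ, I_N − VP⁻¹V]] be the 2N×2N real matrix, and define the vectors r₁ = [𝟙_N; 0], r₂ = [0; 𝟙_N] ∈ ℝ^{2N} and ℓ₁ = [p; 0], ℓ₂ = [0; (1/N)𝟙_N] ∈ ℝ^{2N}. Then B r₁ = r₁, B r₂ = r₂, ℓ₁ᵀ B = ℓ₁ᵀ, ℓ₂ᵀ B = ℓ₂ᵀ, and the 2×2 matrix with entries ℓ_iᵀ r_j (i, j ∈ {1,2}) equals the identity matrix I₂. -/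
open Matrix

/-!
The point is that `V 𝟙 = 0`. Indeed `V² 𝟙 = (P 𝟙 - A P 𝟙)/2 = (p - A p)/2 = 0`, and since `V` is
symmetric, `V² 𝟙 = Vᵀ V 𝟙 = 0` forces `V 𝟙 = 0`; by symmetry also `𝟙ᵀ V = 0`. With
`Āᵀ 𝟙 = 𝟙`, `Ā p = p` and `pᵀ P⁻¹ = 𝟙ᵀ`, the eigenvector identities follow block by block.
-/

/-- In the network setup, with `B = [[Āᵀ, −P⁻¹V],[VĀᵀ, I − VP⁻¹V]]`,
`r₁ = [𝟙; 0]`, `r₂ = [0; 𝟙]`, `ℓ₁ = [p; 0]`, `ℓ₂ = [0; (1/N)𝟙]`, one has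
`B r₁ = r₁`, `B r₂ = r₂`, `ℓ₁ᵀ B = ℓ₁ᵀ`, `ℓ₂ᵀ B = ℓ₂ᵀ`, and the 2×2 matrix of
pairings `ℓᵢᵀ rⱼ` equals the identity. -/
theorem stmt_11 (N : ℕ) (hN : 0 < N) (A : Matrix (Fin N) (Fin N) ℝ)
    (hApos : ∀ i j, 0 ≤ A i j)
    (hAleft : ∀ j, ∑ i, A i j = 1)
    (hAprim : ∃ m : ℕ, 0 < m ∧ ∀ i j, 0 < (A ^ m) i j)
    (p : Fin N → ℝ) (hp : ∀ k, 0 < p k) (hpsum : ∑ k, p k = 1)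
    (hAp : A.mulVec p = p)
    (hbal : Matrix.diagonal p * Aᵀ = A * Matrix.diagonal p)
    (V : Matrix (Fin N) (Fin N) ℝ) (hV : V.PosSemidef)
    (hVsq : V * V = (2⁻¹ : ℝ) • (Matrix.diagonal p - A * Matrix.diagonal p)) :
    let Abar : Matrix (Fin N) (Fin N) ℝ := (2⁻¹ : ℝ) • (1 + A)
    let Pinv : Matrix (Fin N) (Fin N) ℝ := Matrix.diagonal fun k => (p k)⁻¹
    let B := Matrix.fromBlocks Abarᵀ (-(Pinv * V)) (V * Abarᵀ)
      ((1 : Matrix (Fin N) (Fin N) ℝ) - V * Pinv * V)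
    let r₁ : Fin N ⊕ Fin N → ℝ := Sum.elim (fun _ => 1) (fun _ => 0)
    let r₂ : Fin N ⊕ Fin N → ℝ := Sum.elim (fun _ => 0) (fun _ => 1)
    let l₁ : Fin N ⊕ Fin N → ℝ := Sum.elim p (fun _ => 0)
    let l₂ : Fin N ⊕ Fin N → ℝ := Sum.elim (fun _ => 0) (fun _ => (N : ℝ)⁻¹)
    B.mulVec r₁ = r₁ ∧ B.mulVec r₂ = r₂ ∧
    B.vecMul l₁ = l₁ ∧ B.vecMul l₂ = l₂ ∧
    !![l₁ ⬝ᵥ r₁, l₁ ⬝ᵥ r₂; l₂ ⬝ᵥ r₁, l₂ ⬝ᵥ r₂] = (1 : Matrix (Fin 2) (Fin 2) ℝ) := by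
  intro Abar Pinv B r₁ r₂ l₁ l₂
  have hVT : Vᴴ = V := hV.isHermitian
  have hV1 : V *ᵥ (fun _ => (1 : ℝ)) = 0 := by
    rw [← Matrix.conjTranspose_mul_self_mulVec_eq_zero, hVT, hVsq, Matrix.smul_mulVec,
      Matrix.sub_mulVec, ← Matrix.mulVec_mulVec]
    have hd : Matrix.diagonal p *ᵥ (fun _ => (1 : ℝ)) = p := by
      ext i; simp [Matrix.mulVec_diagonal]
    rw [hd, hAp, sub_self, smul_zero]
  have h1V : (fun _ => (1 : ℝ)) ᵥ* V = 0 := by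
    have hT : Vᵀ = V := by simpa [Matrix.conjTranspose_eq_transpose_of_trivial] using hVT
    rw [← Matrix.mulVec_transpose, hT, hV1]
  have hAbar1 : Abarᵀ *ᵥ (fun _ => (1 : ℝ)) = fun _ => 1 := by
    have hA1 : (fun _ => (1 : ℝ)) ᵥ* A = fun _ => 1 := by
      ext j; simp [Matrix.vecMul, dotProduct, hAleft]
    rw [Matrix.mulVec_transpose]
    simp only [Abar, Matrix.vecMul_smul, Matrix.vecMul_add, Matrix.vecMul_one, hA1]
    ext j; simp; norm_num
  have hpAbar : p ᵥ* Abarᵀ = p := by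
    rw [Matrix.vecMul_transpose]
    simp only [Abar, Matrix.smul_mulVec, Matrix.add_mulVec, Matrix.one_mulVec, hAp]
    ext j; simp; ring
  have hpPinv : p ᵥ* Pinv = fun _ => 1 := by
    ext j; simp [Pinv, Matrix.vecMul_diagonal, (hp j).ne']
  have hcV : (fun _ => (N : ℝ)⁻¹) ᵥ* V = 0 := by
    have hc : (fun _ : Fin N => (N : ℝ)⁻¹) = (N : ℝ)⁻¹ • fun _ => (1 : ℝ) := by
      ext j; simp
    rw [hc, Matrix.smul_vecMul, h1V, smul_zero]
  have h0 : (fun _ : Fin N => (0 : ℝ)) = 0 := rfl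
  have hN' : (N : ℝ) ≠ 0 := by exact_mod_cast hN.ne'
  refine ⟨?_, ?_, ?_, ?_, ?_⟩
  · simp only [B, r₁, Matrix.fromBlocks_mulVec, Sum.elim_comp_inl, Sum.elim_comp_inr, h0,
      Matrix.mulVec_zero, add_zero, ← Matrix.mulVec_mulVec, hAbar1, hV1]
  · simp only [B, r₂, Matrix.fromBlocks_mulVec, Sum.elim_comp_inl, Sum.elim_comp_inr, h0,
      Matrix.mulVec_zero, zero_add, Matrix.neg_mulVec, Matrix.sub_mulVec, Matrix.one_mulVec,
      ← Matrix.mulVec_mulVec, hV1, neg_zero, sub_zero]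
  · simp only [B, l₁, Matrix.vecMul_fromBlocks, Sum.elim_comp_inl, Sum.elim_comp_inr, h0,
      Matrix.zero_vecMul, add_zero, Matrix.vecMul_neg, ← Matrix.vecMul_vecMul, hpAbar, hpPinv,
      h1V, neg_zero]
  · simp only [B, l₂, Matrix.vecMul_fromBlocks, Sum.elim_comp_inl, Sum.elim_comp_inr, h0,
      Matrix.zero_vecMul, zero_add, Matrix.vecMul_sub, Matrix.vecMul_one,
      ← Matrix.vecMul_vecMul, hcV, sub_zero]
  · ext i j
    fin_cases i <;> fin_cases j <;> simp [l₁, l₂, r₁, r₂, dotProduct, hpsum, hN']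
end

section
/- Let a ∈ (0,1), μ > 0 and σ > 0, and set A = [[a, 1−a],[1−a, a]], Ā = (I₂ + A)/2, P = (1/2)I₂, and let V be the unique symmetric positive semidefinite square root of (P − PA)/2. Then the characteristic polynomial of the 4×4 matrix Q_d = [[(1 − μσ²)Ā, −2V],[(1 − μσ²)VĀ, Ā]] equals (X − 1)·(X − (1 − μσ²))·(X² − (2 − μσ²)a·X + (1 − μσ²)a). In particular, the eigenvalues of Q_d are 1, 1 − μσ², and the two roots of θ² − (2 − μσ²)aθ + (1 − μσ²)a = 0. -/
/-!
Both `Ā` and `V` are diagonal in the basis `(1,1)`, `(1,-1)`: on `(1,1)` they act as `1` and `0`,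
on `(1,-1)` as `a` and `√((1-a)/2)`. With `c = 1 - μσ²`, the matrix `Q_d` therefore splits into
the `2×2` blocks `[[c, 0],[0, 1]]` and `[[ca, -2v],[cva, a]]` with `v² = (1-a)/2`; the second has
trace `(1+c)a` and determinant `ca`. In the formal proof, `sqrt_entries` pins down
`V = p • [[1,-1],[-1,1]]` with `8p² = 1 - a`, after which the `4×4` determinant defining the
characteristic polynomial is expanded directly. The complex spectrum is the root set of the
characteristic polynomial mapped to `ℂ`.
-/

open Matrix Polynomial

/-- The positive semidefinite square root of `(P - PA)/2` is a multiple of `[[1,-1],[-1,1]]`.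
Nonnegativity of the diagonal forces the two diagonal entries, which have equal squares, to agree;
the vector `(1,1)` is then in the kernel because the squared row sum vanishes. -/
lemma sqrt_entries (a : ℝ) (V : Matrix (Fin 2) (Fin 2) ℝ) (hV : V.PosSemidef)
    (hVsq : V * V = (2⁻¹ : ℝ) •
      (((2⁻¹ : ℝ) • (1 : Matrix (Fin 2) (Fin 2) ℝ)) -
        ((2⁻¹ : ℝ) • (1 : Matrix (Fin 2) (Fin 2) ℝ)) * !![a, 1 - a; 1 - a, a])) :
    ∃ p : ℝ, V = !![p, -p; -p, p] ∧ 8 * p ^ 2 = 1 - a := by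
  have hp : 0 ≤ V 0 0 := hV.diag_nonneg
  have hr : 0 ≤ V 1 1 := hV.diag_nonneg
  have hs : V 1 0 = V 0 1 := by simpa using hV.1.apply 0 1
  have h00 := congrFun (congrFun hVsq 0) 0
  have h01 := congrFun (congrFun hVsq 0) 1
  have h11 := congrFun (congrFun hVsq 1) 1
  simp [Matrix.mul_apply, Fin.sum_univ_two, hs] at h00 h01 h11
  have hpr : V 1 1 = V 0 0 := by
    have h2 : V 1 1 ^ 2 = V 0 0 ^ 2 := by linarith
    exact (pow_left_inj₀ hr hp two_ne_zero).1 h2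
  rw [hpr] at h01
  have hq : V 0 1 = -V 0 0 := by
    have h2 : (V 0 0 + V 0 1) ^ 2 = 0 := by linarith
    linarith [pow_eq_zero_iff two_ne_zero |>.1 h2]
  refine ⟨V 0 0, ?_, ?_⟩
  · ext i j
    fin_cases i <;> fin_cases j <;> simp [hs, hq, hpr]
  · rw [hq] at h00
    linarith

/-- The determinant computation, with `c = 1 - μσ²` and the explicit square root. -/
lemma charpoly_explicit (a c p : ℝ) (hp : 8 * p ^ 2 = 1 - a) :
    (Matrix.fromBlocks (c • ((2⁻¹ : ℝ) • (1 + !![a, 1 - a; 1 - a, a])))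
      ((-2 : ℝ) • !![p, -p; -p, p])
      (c • (!![p, -p; -p, p] * ((2⁻¹ : ℝ) • (1 + !![a, 1 - a; 1 - a, a]))))
      ((2⁻¹ : ℝ) • (1 + !![a, 1 - a; 1 - a, a]))).charpoly =
      (X - C 1) * (X - C c) * (X ^ 2 - C ((1 + c) * a) * X + C (c * a)) := by
  have hA : ((2⁻¹ : ℝ) • (1 + !![a, 1 - a; 1 - a, a]) : Matrix (Fin 2) (Fin 2) ℝ) =
      !![(1 + a) / 2, (1 - a) / 2; (1 - a) / 2, (1 + a) / 2] := by
    ext i j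
    fin_cases i <;> fin_cases j <;> simp <;> ring
  have hVA : !![p, -p; -p, p] * !![(1 + a) / 2, (1 - a) / 2; (1 - a) / 2, (1 + a) / 2] =
      !![p * a, -(p * a); -(p * a), p * a] := by
    ext i j
    fin_cases i <;> fin_cases j <;> simp <;> ring
  rw [hA, hVA]
  have h : (Matrix.reindex finSumFinEquiv finSumFinEquiv
      (Matrix.fromBlocks (c • !![(1 + a) / 2, (1 - a) / 2; (1 - a) / 2, (1 + a) / 2])
        ((-2 : ℝ) • !![p, -p; -p, p]) (c • !![p * a, -(p * a); -(p * a), p * a])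
        !![(1 + a) / 2, (1 - a) / 2; (1 - a) / 2, (1 + a) / 2]) : Matrix (Fin 4) (Fin 4) ℝ) =
      !![c * ((1 + a) / 2), c * ((1 - a) / 2), -2 * p, 2 * p;
         c * ((1 - a) / 2), c * ((1 + a) / 2), 2 * p, -2 * p;
         c * (p * a), -(c * (p * a)), (1 + a) / 2, (1 - a) / 2;
         -(c * (p * a)), c * (p * a), (1 - a) / 2, (1 + a) / 2] := by
    have e0 : finSumFinEquiv.symm (0 : Fin (2 + 2)) = Sum.inl 0 := rfl
    have e1 : finSumFinEquiv.symm (1 : Fin (2 + 2)) = Sum.inl 1 := rfl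
    have e2 : finSumFinEquiv.symm (2 : Fin (2 + 2)) = Sum.inr 0 := rfl
    have e3 : finSumFinEquiv.symm (3 : Fin (2 + 2)) = Sum.inr 1 := rfl
    ext i j
    fin_cases i <;> fin_cases j <;>
      simp [e0, e1, e2, e3]
  rw [← Matrix.charpoly_reindex finSumFinEquiv, h]
  -- Polynomials over the infinite field `ℝ` agree once all their values agree.
  refine Polynomial.funext fun x => ?_
  rw [Matrix.eval_charpoly]
  simp [Matrix.det_succ_row_zero, Fin.sum_univ_succ, Fin.succAbove]
  obtain rfl : a = 1 - 8 * p ^ 2 := by linarith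
  ring

/-- Characteristic polynomial of the exact-diffusion error matrix for the two-agent MSE
network: with `A = [[a,1−a],[1−a,a]]`, `Ā = (I+A)/2`, `P = (1/2)I`, `V` the PSD square root
of `(P − PA)/2`, and `Q_d = [[(1−μσ²)Ā, −2V],[(1−μσ²)VĀ, Ā]]`, the characteristic polynomial
of `Q_d` equals `(X−1)(X−(1−μσ²))(X² − (2−μσ²)a X + (1−μσ²)a)`; in particular the complex
eigenvalues of `Q_d` are `1`, `1−μσ²`, and the two roots of `θ² − (2−μσ²)aθ + (1−μσ²)a = 0`. -/
theorem stmt_15 (a μ σ : ℝ) (ha0 : 0 < a) (ha1 : a < 1) (hμ : 0 < μ) (hσ : 0 < σ)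
    (V : Matrix (Fin 2) (Fin 2) ℝ) (hV : V.PosSemidef)
    (hVsq : V * V = (2⁻¹ : ℝ) •
      (((2⁻¹ : ℝ) • (1 : Matrix (Fin 2) (Fin 2) ℝ)) -
        ((2⁻¹ : ℝ) • (1 : Matrix (Fin 2) (Fin 2) ℝ)) * !![a, 1 - a; 1 - a, a])) :
    let A : Matrix (Fin 2) (Fin 2) ℝ := !![a, 1 - a; 1 - a, a]
    let Abar : Matrix (Fin 2) (Fin 2) ℝ := (2⁻¹ : ℝ) • (1 + A)
    let Qd := Matrix.fromBlocks ((1 - μ * σ ^ 2) • Abar) ((-2 : ℝ) • V)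
      ((1 - μ * σ ^ 2) • (V * Abar)) Abar
    Qd.charpoly =
      (X - C 1) * (X - C (1 - μ * σ ^ 2)) *
        (X ^ 2 - C ((2 - μ * σ ^ 2) * a) * X + C ((1 - μ * σ ^ 2) * a)) ∧
    spectrum ℂ (Qd.map (Complex.ofReal)) =
      {z : ℂ | z = 1 ∨ z = ((1 - μ * σ ^ 2 : ℝ) : ℂ) ∨
        z ^ 2 - (((2 - μ * σ ^ 2) * a : ℝ) : ℂ) * z + (((1 - μ * σ ^ 2) * a : ℝ) : ℂ) = 0} := by
  intro A Abar Qd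
  have hchar : Qd.charpoly =
      (X - C 1) * (X - C (1 - μ * σ ^ 2)) *
        (X ^ 2 - C ((2 - μ * σ ^ 2) * a) * X + C ((1 - μ * σ ^ 2) * a)) := by
    obtain ⟨p, rfl, hp⟩ := sqrt_entries a V hV hVsq
    have h := charpoly_explicit a (1 - μ * σ ^ 2) p hp
    rwa [show 1 + (1 - μ * σ ^ 2) = 2 - μ * σ ^ 2 by ring] at h
  refine ⟨hchar, ?_⟩
  ext z
  have hmap : (Qd.map Complex.ofReal).charpoly = Qd.charpoly.map Complex.ofRealHom :=
    Matrix.charpoly_map Qd Complex.ofRealHom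
  rw [Matrix.mem_spectrum_iff_isRoot_charpoly, hmap, hchar, Set.mem_ofPred_eq]
  simp [Polynomial.IsRoot, sub_eq_zero, or_assoc]
end

section
/- Let a ∈ (0,1) and let s be a real number with s ≥ a + 1. Then the quadratic θ² − (2a − s)θ + (a − s) = 0 has two real roots, and the root θ = ((2a − s) − √((2a − s)² + 4(s − a)))/2 satisfies |θ| > 1. Consequently, for step-sizes μᵉ with μᵉσ² ≥ a + 1 (taking s = μᵉσ²), the EXTRA error recursion for the two-agent mean-square-error example diverges. -/
/-- Instability of EXTRA in the two-agent MSE example: for `a ∈ (0,1)` and `s ≥ a + 1`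
(with `s = μᵉσ²`), the quadratic `θ² − (2a − s)θ + (a − s) = 0` has two real roots, and the
root `θ = ((2a − s) − √((2a − s)² + 4(s − a)))/2` has absolute value strictly larger than 1. -/
theorem stmt_17 (a s : ℝ) (ha0 : 0 < a) (ha1 : a < 1) (hs : a + 1 ≤ s) :
    0 ≤ (2 * a - s) ^ 2 + 4 * (s - a) ∧
    (let θ₁ : ℝ := ((2 * a - s) + Real.sqrt ((2 * a - s) ^ 2 + 4 * (s - a))) / 2
     let θ₂ : ℝ := ((2 * a - s) - Real.sqrt ((2 * a - s) ^ 2 + 4 * (s - a))) / 2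
     θ₁ ^ 2 - (2 * a - s) * θ₁ + (a - s) = 0 ∧
     θ₂ ^ 2 - (2 * a - s) * θ₂ + (a - s) = 0 ∧
     |θ₂| > 1) := by
  have hD : 0 ≤ (2 * a - s) ^ 2 + 4 * (s - a) := by nlinarith [sq_nonneg (2 * a - s)]
  have hsq := Real.sq_sqrt hD
  -- `θ₂ < -1` in disguise: squaring reduces it to `1 + 3 * a < 2 * s`, i.e. the quadratic is
  -- negative at `-1`, so `-1` lies strictly between the two roots.
  have hlt : 2 * a - s + 2 < Real.sqrt ((2 * a - s) ^ 2 + 4 * (s - a)) :=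
    Real.lt_sqrt_of_sq_lt (by nlinarith)
  refine ⟨hD, ?_, ?_, ?_⟩
  · linear_combination hsq / 4
  · linear_combination hsq / 4
  · exact lt_abs.mpr (Or.inr (by linarith))
end
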